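/- Let X and Y be C*-semi-inner product A-modules and T: X → Y a linear map such that there exists K ≥ 0 with [Tx, Tx] ≤ K·[x,x] for all x ∈ X. Then T is bounded with ‖T‖ ≤ K^{1/2} and T is A-linear: T(xa) = (Tx)·a for all x ∈ X, a ∈ A. -/

import Mathlib

/-- A C*-semi-inner product on a right `A`-module `X` (Janfada–Shamsi Gamchi–Niknam). -/
structure CSIP (A : Type*) [CStarAlgebra A] [PartialOrder A] [StarOrderedRing A]
    (X : Type*) [AddCommGroup X] [Module ℂ X] where
  /-- the `A`-valued semi-inner product -/
  ip : X → X → A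
  /-- the right `A`-module action on `X` -/
  rsmul : X → A → X
  rsmul_add_left : ∀ (x y : X) (a : A), rsmul (x + y) a = rsmul x a + rsmul y a
  rsmul_add_right : ∀ (x : X) (a b : A), rsmul x (a + b) = rsmul x a + rsmul x b
  rsmul_mul : ∀ (x : X) (a b : A), rsmul x (a * b) = rsmul (rsmul x a) b
  rsmul_one : ∀ x : X, rsmul x 1 = x
  rsmul_smul_one : ∀ (x : X) (c : ℂ), rsmul x (c • (1 : A)) = c • x
  ip_nonneg : ∀ x, 0 ≤ ip x x
  ip_definite : ∀ x, ip x x = 0 → x = 0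
  ip_add_right : ∀ x y z, ip x (y + z) = ip x y + ip x z
  ip_smul_right : ∀ (c : ℂ) (x y : X), ip x (c • y) = c • ip x y
  ip_rsmul_right : ∀ (x y : X) (a : A), ip x (rsmul y a) = ip x y * a
  ip_rsmul_left : ∀ (x y : X) (a : A), ip (rsmul x a) y = star a * ip x y
  cauchy_schwarz : ∀ x y, ‖ip y x‖ ^ 2 ≤ ‖ip y y‖ * ‖ip x x‖

theorem aux_norm {A : Type*} [CStarAlgebra A] [PartialOrder A] [StarOrderedRing A]
    (b a : A) (C : ℝ) (hC : 0 ≤ C) (h : star b * b ≤ C • (star a * a)) :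
    ‖b‖ ≤ Real.sqrt C * ‖a‖ := by
  have h1 := CStarAlgebra.norm_le_norm_of_nonneg_of_le (star_mul_self_nonneg b) h
  rw [norm_smul, CStarRing.norm_star_mul_self, CStarRing.norm_star_mul_self,
    Real.norm_of_nonneg hC] at h1
  refine abs_le_of_sq_le_sq' ?_ (by positivity) |>.2
  rw [mul_pow, Real.sq_sqrt hC]
  nlinarith

theorem aux_conj {A : Type*} [CStarAlgebra A] [PartialOrder A] [StarOrderedRing A]
    (b a g : A) (C : ℝ) (h : star b * b ≤ C • (star a * a)) :
    star (b * g) * (b * g) ≤ C • (star (a * g) * (a * g)) := by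
  have := star_left_conjugate_le_conjugate h g
  simpa [mul_assoc, star_mul] using this

theorem aux_lin {A : Type*} [CStarAlgebra A] [PartialOrder A] [StarOrderedRing A]
    (r : A →ₗ[ℂ] A) (C : ℝ) (hC : 0 ≤ C)
    (h : ∀ a, star (r a) * r a ≤ C • (star a * a)) (a : A) : r a = r 1 * a := by
  let R : A →L[ℂ] A := r.mkContinuous (Real.sqrt C) (fun a => aux_norm _ _ _ hC (h a))
  have hR : ∀ a, R a = r a := fun _ => rfl
  have hinv : ∀ z : ℂ, NormedSpace.exp (z • a) * NormedSpace.exp ((-z) • a) = 1 := by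
    intro z
    let : NormedAlgebra ℚ A := NormedAlgebra.restrictScalars ℚ ℂ A
    rw [neg_smul, ← NormedSpace.exp_add_of_commute (Commute.neg_right (Commute.refl _))]
    simp
  have hinv' : ∀ z : ℂ, NormedSpace.exp ((-z) • a) * NormedSpace.exp (z • a) = 1 := by
    intro z
    simpa using hinv (-z)
  have hexp : ∀ z : ℂ, HasDerivAt (fun z : ℂ => NormedSpace.exp (z • a))
      (NormedSpace.exp (z • a) * a) z := fun z => hasDerivAt_exp_smul_const a z
  have hde : Differentiable ℂ (fun z : ℂ => NormedSpace.exp (z • a)) :=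
    fun z => (hexp z).differentiableAt
  have hd : Differentiable ℂ
      (fun z : ℂ => R (NormedSpace.exp (z • a)) * NormedSpace.exp ((-z) • a)) :=
    (R.differentiable.comp hde).mul (hde.comp differentiable_neg)
  have hb : Bornology.IsBounded (Set.range
      (fun z : ℂ => R (NormedSpace.exp (z • a)) * NormedSpace.exp ((-z) • a))) := by
    rw [isBounded_iff_forall_norm_le]
    refine ⟨Real.sqrt C * ‖(1 : A)‖, ?_⟩
    rintro _ ⟨z, rfl⟩
    have := aux_conj _ _ (NormedSpace.exp ((-z) • a)) C (h (NormedSpace.exp (z • a)))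
    rw [hinv] at this
    exact aux_norm _ _ _ hC this
  have hc : ∀ z : ℂ, R (NormedSpace.exp (z • a)) = r 1 * NormedSpace.exp (z • a) := by
    intro z
    have h1 := hd.apply_eq_apply_of_bounded hb z 0
    simp only [zero_smul, neg_zero, NormedSpace.exp_zero, mul_one, hR] at h1
    rw [← h1, mul_assoc, hinv', mul_one, hR]
  have e1 : HasDerivAt (fun z : ℂ => R (NormedSpace.exp (z • a))) (R a) 0 := by
    have := R.hasFDerivAt.comp_hasDerivAt (0 : ℂ) (hexp 0)
    simp only [zero_smul, NormedSpace.exp_zero, one_mul] at this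
    exact this
  have e2 : HasDerivAt (fun z : ℂ => r 1 * NormedSpace.exp (z • a)) (r 1 * a) 0 := by
    have := (hexp 0).const_mul (r 1)
    simpa using this
  rw [funext hc] at e1
  exact e1.unique e2

/-- If `[Tx,Tx] ≤ K[x,x]` then `T` is bounded with `‖T‖ ≤ K^{1/2}` and `A`-linear. -/
theorem stmt11 (A : Type*) [CStarAlgebra A] [PartialOrder A] [StarOrderedRing A]
    (X Y : Type*) [AddCommGroup X] [Module ℂ X] [AddCommGroup Y] [Module ℂ Y]
    (SX : CSIP A X) (SY : CSIP A Y)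
    (hcsY : ∀ y z : Y, star (SY.ip y z) * SY.ip y z ≤ ‖SY.ip y y‖ • SY.ip z z)
    (T : X →ₗ[ℂ] Y) (K : ℝ) (hK : 0 ≤ K)
    (h : ∀ x : X, SY.ip (T x) (T x) ≤ K • SX.ip x x) :
    (∀ x : X, Real.sqrt ‖SY.ip (T x) (T x)‖ ≤ Real.sqrt K * Real.sqrt ‖SX.ip x x‖) ∧
    (∀ (x : X) (a : A), T (SX.rsmul x a) = SY.rsmul (T x) a) := by
  refine ⟨fun x => ?_, fun x a => ?_⟩
  · rw [← Real.sqrt_mul hK]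
    apply Real.sqrt_le_sqrt
    have h1 := CStarAlgebra.norm_le_norm_of_nonneg_of_le (SY.ip_nonneg (T x)) (h x)
    rwa [norm_smul, Real.norm_of_nonneg hK] at h1
  · have hsm : ∀ (c : ℂ) (b : A), SX.rsmul x (c • b) = c • SX.rsmul x b := by
      intro c b
      rw [← SX.rsmul_smul_one, ← SX.rsmul_mul, mul_smul_comm, mul_one]
    have key : ∀ y : Y, SY.ip y (T (SX.rsmul x a)) = SY.ip y (T x) * a := by
      intro y
      let r : A →ₗ[ℂ] A :=
        { toFun := fun b => SY.ip y (T (SX.rsmul x b))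
          map_add' := fun b c => by rw [SX.rsmul_add_right, map_add, SY.ip_add_right]
          map_smul' := fun c b => by
            rw [hsm, map_smul, SY.ip_smul_right, RingHom.id_apply] }
      have := aux_lin r (‖SY.ip y y‖ * (K * ‖SX.ip x x‖)) (by positivity) ?_ a
      · simpa [r, SX.rsmul_one] using this
      · intro b
        refine (hcsY y (T (SX.rsmul x b))).trans ?_
        rw [mul_smul, mul_smul]
        refine smul_le_smul_of_nonneg_left ((h _).trans ?_) (norm_nonneg _)
        refine smul_le_smul_of_nonneg_left ?_ hK
        rw [SX.ip_rsmul_left, SX.ip_rsmul_right, ← mul_assoc]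
        have h2 : SX.ip x x ≤ algebraMap ℝ A ‖SX.ip x x‖ :=
          IsSelfAdjoint.le_algebraMap_norm_self (IsSelfAdjoint.of_nonneg (SX.ip_nonneg x))
        have h3 := star_left_conjugate_le_conjugate h2 b
        simpa [Algebra.algebraMap_eq_smul_one] using h3
    rw [← sub_eq_zero]
    apply SY.ip_definite
    have hs : ∀ u v w : Y, SY.ip u (v - w) = SY.ip u v - SY.ip u w := by
      intro u v w
      rw [eq_sub_iff_add_eq, ← SY.ip_add_right, sub_add_cancel]
    rw [hs, key, SY.ip_rsmul_right, sub_self]
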